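/- Let B^n be the closed unit ball in ℝ^n and f : B^n → ℝ^n a continuous map such that for every x on the boundary sphere with f(x) ≠ 0, we have x ≠ f(x)/‖f(x)‖. Then f has a zero in B^n. -/

import Mathlib

/-!
If `G` is a `C¹` map that fixes the boundary of a compact convex body `s` and `u = G - id`, then
for small `t` the map `id + t • u` is a bijection of `s`, so `∫ x in s, det (1 + t • u' x)` is the
volume of `s`. This integral is a polynomial in `t`, hence it is the volume of `s` at `t = 1` too,
and `det G'` cannot vanish identically on `s`. In particular `G` is not a retraction of a ball onto
its sphere. By smoothing, a continuous map equal to the identity off a compact set is surjective,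
and applying this to a cut-off of `x ↦ x - g x` gives Brouwer's fixed point theorem. Finally, a
fixed point of `x ↦ radialRetraction (x + f x)` is either a zero of `f` or a unit vector `x` such
that `f x` is a positive multiple of `x`.
-/

open MeasureTheory Metric Set Polynomial
open scoped NNReal Topology

theorem exists_polynomial_eval_eq_det_one_add_smul {R M : Type*} [CommRing R] [Nontrivial R]
    [AddCommGroup M] [Module R M] [Module.Free R M] [Module.Finite R M] (A : Module.End R M) :
    ∃ p : R[X], p.natDegree ≤ Module.finrank R M ∧ ∀ t, p.eval t = LinearMap.det (1 + t • A) := by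
  let b := Module.finBasis R M
  let B := LinearMap.toMatrix b b A
  refine ⟨((X : R[X]) • B.map C + (1 : Matrix _ _ R).map C).det, ?_, fun t => ?_⟩
  · simpa using natDegree_det_X_add_C_le B 1
  · have hB : LinearMap.toMatrix b b (1 + t • A) = t • B + 1 := by
      simp only [map_add, map_smul, LinearMap.toMatrix_one, B, add_comm]
    rw [← LinearMap.det_toMatrix b, hB, ← coe_evalRingHom, RingHom.map_det]
    congr 1
    ext i j
    by_cases hij : i = j <;> simp [hij, mul_comm _ t]

theorem integral_eval_eq_const_of_infinite {α 𝕜 : Type*} [MeasurableSpace α] {μ : Measure α}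
    [RCLike 𝕜] {p : α → 𝕜[X]} {d : ℕ} (hdeg : ∀ x, (p x).natDegree ≤ d) {T : Set 𝕜}
    (hT : T.Infinite) (hint : ∀ t ∈ T, Integrable (fun x => (p x).eval t) μ) {c : 𝕜}
    (hc : ∀ t ∈ T, ∫ x, (p x).eval t ∂μ = c) (t : 𝕜) : ∫ x, (p x).eval t ∂μ = c := by
  obtain ⟨S, hST, hcard⟩ := hT.exists_subset_card_eq (d + 1)
  have hinj : InjOn id (S : Set 𝕜) := injOn_id _
  have hS : S.Nonempty := Finset.card_pos.1 (by omega)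
  let w : 𝕜 → 𝕜 := fun a => (Lagrange.basis S id a).eval t
  have hw : ∑ a ∈ S, w a = 1 := by
    simpa only [eval_finsetSum, eval_one] using congrArg (eval t) (Lagrange.sum_basis hinj hS)
  have hinterp (x : α) : (p x).eval t = ∑ a ∈ S, w a * (p x).eval a := by
    have hlt : (p x).degree < S.card := by
      rw [hcard]
      exact (degree_le_of_natDegree_le (hdeg x)).trans_lt (by exact_mod_cast d.lt_succ_self)
    conv_lhs => rw [Lagrange.eq_interpolate hinj hlt, Lagrange.interpolate_apply]
    simp only [eval_finsetSum, eval_mul, eval_C, id, w, mul_comm]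
  calc ∫ x, (p x).eval t ∂μ = ∑ a ∈ S, ∫ x, w a * (p x).eval a ∂μ := by
        simp only [hinterp]
        exact integral_finsetSum S fun a ha => (hint a (hST ha)).const_mul _
    _ = ∑ a ∈ S, w a * c :=
        Finset.sum_congr rfl fun a ha => by rw [integral_const_mul, hc a (hST ha)]
    _ = c := by rw [← Finset.sum_mul, hw, one_mul]

theorem image_eq_self_of_bijective_of_eqOn_compl {α : Type*} {f : α → α} {s : Set α}
    (hf : Function.Bijective f) (h : EqOn f id sᶜ) : f '' s = s := by
  rw [← compl_inj_iff, ← image_compl_eq hf, h.image_eq, image_id]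

theorem bijective_id_add_of_lipschitzWith {E : Type*} [NormedAddCommGroup E] [CompleteSpace E]
    {u : E → E} {K : ℝ≥0} (hu : LipschitzWith K u) (hK : K < 1) :
    Function.Bijective fun x => x + u x := by
  constructor
  · have hK' : K < (1 : ℝ≥0)⁻¹ := by rwa [inv_one]
    exact (AntilipschitzWith.id.add_lipschitzWith hu hK').injective
  · intro y
    have hcontr : ContractingWith K fun x => y - u x :=
      ⟨hK, by simpa using (LipschitzWith.const y).sub hu⟩
    exact ⟨hcontr.fixedPoint, eq_sub_iff_add_eq.1 hcontr.fixedPoint_isFixedPt.symm⟩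

theorem inter_frontier_nonempty_of_isPreconnected {X : Type*} [TopologicalSpace X] {s t : Set X}
    (ht : IsPreconnected t) (hs : (t ∩ s).Nonempty) (hsc : (t ∩ sᶜ).Nonempty) :
    (t ∩ frontier s).Nonempty := by
  by_contra hempty
  have hcover : t ⊆ interior s ∪ interior sᶜ := by
    rw [← compl_frontier_eq_union_interior]
    exact fun x hx hxs => hempty ⟨x, hx, hxs⟩
  have hdisj : Disjoint (interior s) (interior sᶜ) :=
    disjoint_compl_right.mono interior_subset interior_subset
  obtain ⟨x, hxt, hxs⟩ := hs
  obtain ⟨y, hyt, hys⟩ := hsc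
  rcases ht.subset_or_subset isOpen_interior isOpen_interior hdisj hcover with h | h
  · exact hys (interior_subset (h hyt))
  · exact interior_subset (h hxt) hxs

theorem lipschitzWith_indicator_of_eq_zero_on_frontier {E F : Type*} [SeminormedAddCommGroup E]
    [NormedSpace ℝ E] [SeminormedAddCommGroup F] {u : E → F} {s : Set E} {K : ℝ≥0}
    (hs : IsClosed s) (hu : LipschitzOnWith K u s) (h0 : ∀ x ∈ frontier s, u x = 0) :
    LipschitzWith K (s.indicator u) := by
  have hcross {x y : E} (hx : x ∈ s) (hy : y ∉ s) : ‖u x‖ ≤ K * ‖x - y‖ := by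
    obtain ⟨z, hz, hzs⟩ := inter_frontier_nonempty_of_isPreconnected
      (convex_segment x y).isPreconnected ⟨x, left_mem_segment ℝ x y, hx⟩
      ⟨y, right_mem_segment ℝ x y, hy⟩
    calc ‖u x‖ = ‖u x - u z‖ := by rw [h0 z hzs, sub_zero]
      _ ≤ K * ‖x - z‖ := hu.norm_sub_le hx (hs.frontier_subset hzs)
      _ ≤ K * ‖x - y‖ := by
        gcongr
        rw [norm_sub_rev x z, norm_sub_rev x y]
        exact norm_sub_le_of_mem_segment hz
  refine lipschitzWith_iff_norm_sub_le.2 fun x y => ?_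
  by_cases hx : x ∈ s <;> by_cases hy : y ∈ s <;>
    simp only [indicator_of_mem, indicator_of_notMem, hx, hy, not_false_eq_true, sub_zero,
      zero_sub, norm_neg, norm_zero]
  · exact hu.norm_sub_le hx hy
  · exact hcross hx hy
  · rw [norm_sub_rev]
    exact hcross hy hx
  · positivity

theorem bijOn_id_add_of_lipschitzOnWith {E : Type*} [NormedAddCommGroup E] [NormedSpace ℝ E]
    [CompleteSpace E] {u : E → E} {s : Set E} {K : ℝ≥0} (hs : IsClosed s)
    (hu : LipschitzOnWith K u s) (hK : K < 1) (h0 : ∀ x ∈ frontier s, u x = 0) :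
    BijOn (fun x => x + u x) s s := by
  have hbij := bijective_id_add_of_lipschitzWith
    (lipschitzWith_indicator_of_eq_zero_on_frontier hs hu h0) hK
  have himage := image_eq_self_of_bijective_of_eqOn_compl (s := s) hbij fun x hx => by
    simp only [indicator_of_notMem hx, add_zero, id]
  have hon : BijOn (fun x => x + s.indicator u x) s s :=
    ⟨(mapsTo_image _ s).mono_right himage.subset, hbij.injective.injOn, himage.superset⟩
  exact hon.congr fun x hx => by simp only [indicator_of_mem hx]

section Determinant

variable {E : Type*} [NormedAddCommGroup E] [NormedSpace ℝ E] [FiniteDimensional ℝ E]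

theorem det_one_add_pos_of_norm_lt_one {A : E →L[ℝ] E} (hA : ‖A‖ < 1) :
    0 < (1 + A).det := by
  have : CompleteSpace E := FiniteDimensional.complete ℝ E
  have hne (t : ℝ) (ht : t ∈ Icc (0 : ℝ) 1) : (1 + t • A).det ≠ 0 := by
    have hnorm : ‖-(t • A)‖ < 1 := by
      rw [norm_neg, norm_smul, Real.norm_of_nonneg ht.1]
      exact (mul_le_of_le_one_left (norm_nonneg A) ht.2).trans_lt hA
    have hunit : IsUnit (1 + t • A) := by simpa using isUnit_one_sub_of_norm_lt_one hnorm
    exact (LinearMap.isUnit_det _ (hunit.map ContinuousLinearMap.toLinearMapRingHom)).ne_zero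
  have hcont : Continuous fun t : ℝ => (1 + t • A).det :=
    ContinuousLinearMap.continuous_det.comp (by fun_prop)
  by_contra! hle
  have hone : (1 + (0 : ℝ) • A).det = 1 := by
    rw [zero_smul, add_zero]
    exact LinearMap.det_id
  obtain ⟨t, ht, h0⟩ := intermediate_value_Icc' zero_le_one hcont.continuousOn
    (show (0 : ℝ) ∈ Icc (1 + (1 : ℝ) • A).det (1 + (0 : ℝ) • A).det from
      ⟨by rwa [one_smul], by rw [hone]; exact zero_le_one⟩)
  exact hne t ht h0

section ChangeOfVariables

variable [MeasurableSpace E] [BorelSpace E] (μ : Measure E) [μ.IsAddHaarMeasure]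
  {s : Set E} {u : E → E} {u' : E → E →L[ℝ] E} {K : ℝ≥0}

theorem integrableOn_det_one_add_and_setIntegral_eq_of_lt_one (hs : IsCompact s)
    (hconv : Convex ℝ s) (hu : ∀ x ∈ s, HasFDerivWithinAt u (u' x) s x)
    (hbound : ∀ x ∈ s, ‖u' x‖₊ ≤ K) (hK : K < 1) (h0 : ∀ x ∈ frontier s, u x = 0) :
    IntegrableOn (fun x => (1 + u' x).det) s μ ∧
      ∫ x in s, (1 + u' x).det ∂μ = μ.real s := by
  have : CompleteSpace E := FiniteDimensional.complete ℝ E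
  have hbij := bijOn_id_add_of_lipschitzOnWith hs.isClosed
    (hconv.lipschitzOnWith_of_nnnorm_hasFDerivWithin_le hu hbound) hK h0
  have hderiv (x : E) (hx : x ∈ s) : HasFDerivWithinAt (fun x => x + u x) (1 + u' x) s x :=
    (hasFDerivWithinAt_id x s).add (hu x hx)
  have habs : EqOn (fun x => |(1 + u' x).det|) (fun x => (1 + u' x).det) s := fun x hx =>
    abs_of_pos (det_one_add_pos_of_norm_lt_one ((hbound x hx).trans_lt hK))
  have hmeas := hs.isClosed.measurableSet
  constructor
  · have h := (integrableOn_image_iff_integrableOn_abs_det_fderiv_smul μ hmeas hderiv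
      hbij.injOn fun _ => (1 : ℝ)).1
      (by rw [hbij.image_eq]; exact integrableOn_const hs.measure_lt_top.ne)
    simp only [smul_eq_mul, mul_one] at h
    exact h.congr_fun habs hmeas
  · have h := integral_image_eq_integral_abs_det_fderiv_smul μ hmeas hderiv hbij.injOn
      fun _ => (1 : ℝ)
    simp only [smul_eq_mul, mul_one, hbij.image_eq, setIntegral_const] at h
    rw [h, setIntegral_congr_fun hmeas habs]

theorem setIntegral_det_one_add_eq (hs : IsCompact s) (hconv : Convex ℝ s)
    (hu : ∀ x ∈ s, HasFDerivWithinAt u (u' x) s x) (hbound : ∀ x ∈ s, ‖u' x‖₊ ≤ K)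
    (h0 : ∀ x ∈ frontier s, u x = 0) :
    ∫ x in s, (1 + u' x).det ∂μ = μ.real s := by
  choose p hdeg heval using fun x =>
    exists_polynomial_eval_eq_det_one_add_smul (u' x : E →ₗ[ℝ] E)
  have heval' (x : E) (t : ℝ) : (p x).eval t = (1 + t • u' x).det := heval x t
  have hsmall (t : ℝ) (ht : t ∈ Ioo 0 (K + 1 : ℝ)⁻¹) :
      IntegrableOn (fun x => (1 + t • u' x).det) s μ ∧
        ∫ x in s, (1 + t • u' x).det ∂μ = μ.real s := by
    have htK : ‖t‖₊ * K < 1 := by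
      rw [← NNReal.coe_lt_coe, NNReal.coe_mul, coe_nnnorm, Real.norm_of_nonneg ht.1.le]
      have hK1 : (0 : ℝ) < K + 1 := by positivity
      calc t * K ≤ t * (K + 1) := by gcongr; exacts [ht.1.le, le_add_of_nonneg_right zero_le_one]
        _ < 1 := (lt_mul_inv_iff₀ hK1).1 (by rw [one_mul]; exact ht.2)
    refine integrableOn_det_one_add_and_setIntegral_eq_of_lt_one (u := fun x => t • u x) μ hs hconv
      (fun x hx => (hu x hx).const_smul t) (fun x hx => ?_) htK fun x hx => by
        rw [h0 x hx, smul_zero]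
    rw [nnnorm_smul]
    gcongr
    exact hbound x hx
  have h := integral_eval_eq_const_of_infinite (μ := μ.restrict s) hdeg
    (Ioo_infinite (by positivity : (0 : ℝ) < (K + 1 : ℝ)⁻¹))
    (fun t ht => by simpa only [heval', IntegrableOn] using (hsmall t ht).1)
    (fun t ht => by simpa only [heval'] using (hsmall t ht).2) 1
  simpa only [heval', one_smul] using h

end ChangeOfVariables

theorem exists_det_fderiv_ne_zero_of_eq_self_on_frontier {s : Set E} {N : E → E}
    (hs : IsCompact s) (hconv : Convex ℝ s) (hint : (interior s).Nonempty)
    (hN : ContDiff ℝ 1 N) (hfix : ∀ x ∈ frontier s, N x = x) :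
    ∃ x ∈ s, (fderiv ℝ N x).det ≠ 0 := by
  borelize E
  by_contra! hdet
  have hderiv : Continuous fun x => fderiv ℝ N x - 1 :=
    (hN.continuous_fderiv one_ne_zero).sub continuous_const
  obtain ⟨C, hC⟩ := hs.exists_bound_of_continuousOn hderiv.continuousOn
  have hvol := setIntegral_det_one_add_eq (u := fun x => N x - x) (K := C.toNNReal)
    Measure.addHaar hs hconv
    (fun x _ => (((hN.differentiable one_ne_zero) x).hasFDerivAt.sub
      (hasFDerivAt_id x)).hasFDerivWithinAt)
    (fun x hx => NNReal.coe_le_coe.1 ((hC x hx).trans (Real.le_coe_toNNReal C)))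
    fun x hx => sub_eq_zero.2 (hfix x hx)
  have hzero : ∫ x in s, (1 + (fderiv ℝ N x - 1)).det ∂Measure.addHaar = 0 :=
    setIntegral_eq_zero_of_forall_eq_zero fun x hx => by rw [add_sub_cancel, hdet x hx]
  have hpos : 0 < Measure.addHaar.real s :=
    ENNReal.toReal_pos (Measure.measure_pos_of_nonempty_interior _ hint).ne' hs.measure_lt_top.ne
  exact hpos.ne (hzero.symm.trans hvol)

end Determinant

theorem det_eq_zero_of_hasFDerivAt_of_norm_eq_const {E : Type*} [NormedAddCommGroup E]
    [InnerProductSpace ℝ E] [FiniteDimensional ℝ E] {G : E → E} {G' : E →L[ℝ] E} {r : ℝ} {x : E}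
    (hG : HasFDerivAt G G' x) (hr : ∀ᶠ y in 𝓝 x, ‖G y‖ = r) (hx : G x ≠ 0) : G'.det = 0 := by
  by_contra hne
  have hsurj : Function.Surjective G' :=
    ((Module.End.isUnit_iff _).1
      ((LinearMap.isUnit_iff_isUnit_det (G' : E →ₗ[ℝ] E)).2 (isUnit_iff_ne_zero.2 hne))).2
  obtain ⟨w, hw⟩ := hsurj (G x)
  have hconst : HasFDerivAt (fun y => ‖G y‖ ^ 2) (0 : E →L[ℝ] ℝ) x :=
    (hasFDerivAt_const (r ^ 2) x).congr_of_eventuallyEq (hr.mono fun y hy => by simp only [hy])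
  have horth := congrArg (fun T : E →L[ℝ] ℝ => T w) (hG.norm_sq.unique hconst)
  simp [hw, hx] at horth

theorem exists_eq_center_of_contDiff_of_eq_self_on_sphere {E : Type*} [NormedAddCommGroup E]
    [InnerProductSpace ℝ E] [FiniteDimensional ℝ E] {G : E → E} {c : E} {R : ℝ}
    (hG : ContDiff ℝ 1 G) (hR : 0 < R) (hfix : ∀ x ∈ sphere c R, G x = x) : ∃ x, G x = c := by
  by_contra! hc
  have hne (x : E) : ‖G x - c‖ ≠ 0 := norm_ne_zero_iff.2 (sub_ne_zero.2 (hc x))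
  let N : E → E := fun x => (R * ‖G x - c‖⁻¹) • (G x - c)
  have hGc : ContDiff ℝ 1 fun x => G x - c := hG.sub contDiff_const
  have hN : ContDiff ℝ 1 N :=
    (contDiff_const.mul ((hGc.norm ℝ fun x => sub_ne_zero.2 (hc x)).inv hne)).smul hGc
  have hnorm (x : E) : ‖N x‖ = R := by
    rw [norm_smul, norm_mul, norm_inv, norm_norm, Real.norm_of_nonneg hR.le,
      inv_mul_cancel_right₀ (hne x)]
  have hNfix (x : E) (hx : x ∈ frontier (closedBall c R)) : c + N x = x := by
    rw [frontier_closedBall c hR.ne'] at hx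
    simp only [N, hfix x hx, ← dist_eq_norm, mem_sphere.1 hx, mul_inv_cancel₀ hR.ne', one_smul,
      add_sub_cancel]
  obtain ⟨x, -, hdet⟩ := exists_det_fderiv_ne_zero_of_eq_self_on_frontier
    (isCompact_closedBall c R) (convex_closedBall c R)
    ((nonempty_ball.2 hR).mono ball_subset_interior_closedBall) (contDiff_const.add hN) hNfix
  have hNx : N x ≠ 0 := norm_pos_iff.1 (by rwa [hnorm])
  rw [fderiv_const_add] at hdet
  exact hdet (det_eq_zero_of_hasFDerivAt_of_norm_eq_const
    (hN.differentiable one_ne_zero x).hasFDerivAt (.of_forall hnorm) hNx)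

theorem exists_contDiff_forall_ne {E : Type*} [NormedAddCommGroup E] [NormedSpace ℝ E]
    [FiniteDimensional ℝ E] {F : E → E} {c : E} (n : ℕ∞) (hF : Continuous F) (hc : ∀ x, F x ≠ c) :
    ∃ G : E → E, ContDiff ℝ n G ∧ (∀ x, G x ≠ c) ∧ ∀ x, F x = x → G x = x := by
  obtain ⟨g, hg, hdist, hsupp⟩ := (hF.sub continuous_id).exists_contDiff_approx n
    (ε := fun x => ‖F x - c‖) (by fun_prop) fun x => norm_pos_iff.2 (sub_ne_zero.2 (hc x))
  refine ⟨fun x => x + g x, contDiff_id.add hg, fun x hx => (hdist x).ne ?_, fun x hx => ?_⟩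
  · rw [Pi.sub_apply, id, eq_sub_of_add_eq' hx, dist_eq_norm', sub_sub_sub_cancel_right]
  · have hgx : g x = 0 := by
      by_contra h
      exact hsupp h (sub_eq_zero.2 hx)
    simp only [hgx, add_zero]

theorem surjective_of_hasCompactSupport_sub_self_of_innerProductSpace {E : Type*}
    [NormedAddCommGroup E] [InnerProductSpace ℝ E] [FiniteDimensional ℝ E] {F : E → E}
    (hF : Continuous F) (hsupp : HasCompactSupport fun x => F x - x) : Function.Surjective F := by
  intro y
  by_contra! hy
  obtain ⟨G, hG, hGy, hGfix⟩ := exists_contDiff_forall_ne 1 hF hy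
  obtain ⟨R, hR, hball⟩ := hsupp.isCompact.isBounded.subset_ball_lt 0 y
  have hfix (x : E) (hx : x ∈ sphere y R) : G x = x := by
    have hx' : x ∉ tsupport fun x => F x - x := fun h => (mem_ball.1 (hball h)).ne hx
    exact hGfix x (sub_eq_zero.1 (image_eq_zero_of_notMem_tsupport (f := fun x => F x - x) hx'))
  obtain ⟨x, hx⟩ := exists_eq_center_of_contDiff_of_eq_self_on_sphere hG hR hfix
  exact hGy x hx

theorem surjective_of_hasCompactSupport_sub_self {E : Type*} [NormedAddCommGroup E]
    [NormedSpace ℝ E] [FiniteDimensional ℝ E] {F : E → E} (hF : Continuous F)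
    (hsupp : HasCompactSupport fun x => F x - x) : Function.Surjective F := by
  let e := toEuclidean (E := E)
  have hconj : HasCompactSupport fun z => e (F (e.symm z)) - z := by
    convert! (hsupp.comp_homeomorph e.symm.toHomeomorph).comp_left (map_zero e) using 1
    ext1 z
    simp
  have hsurj : Function.Surjective (e ∘ F ∘ e.symm) :=
    surjective_of_hasCompactSupport_sub_self_of_innerProductSpace (by fun_prop) hconj
  simpa using hsurj

section Brouwer

variable {E : Type*} [NormedAddCommGroup E] [NormedSpace ℝ E]

/-- The radial retraction of a normed space onto its closed unit ball. -/
noncomputable def radialRetraction (x : E) : E := (max 1 ‖x‖)⁻¹ • x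

theorem continuous_radialRetraction : Continuous (radialRetraction : E → E) :=
  ((continuous_const.max continuous_norm).inv₀ fun _ =>
    (zero_lt_one.trans_le (le_max_left _ _)).ne').smul continuous_id

theorem radialRetraction_mem_closedBall (x : E) : radialRetraction x ∈ closedBall (0 : E) 1 := by
  rw [mem_closedBall_zero_iff, radialRetraction, norm_smul, norm_inv,
    Real.norm_of_nonneg (by positivity)]
  exact inv_mul_le_one_of_le₀ (le_max_right _ _) (by positivity)

theorem radialRetraction_of_mem_closedBall {x : E} (hx : x ∈ closedBall (0 : E) 1) :
    radialRetraction x = x := by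
  rw [radialRetraction, max_eq_left (mem_closedBall_zero_iff.1 hx), inv_one, one_smul]

theorem radialRetraction_of_one_le_norm {x : E} (hx : 1 ≤ ‖x‖) :
    radialRetraction x = ‖x‖⁻¹ • x := by
  rw [radialRetraction, max_eq_right hx]

variable [FiniteDimensional ℝ E]

theorem exists_fixedPoint_of_continuousOn_closedBall {g : E → E}
    (hg : ContinuousOn g (closedBall 0 1)) (hmaps : MapsTo g (closedBall 0 1) (closedBall 0 1)) :
    ∃ x ∈ closedBall (0 : E) 1, g x = x := by
  let a : ContDiffBump (0 : E) := ⟨1, 2, one_pos, one_lt_two⟩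
  let F : E → E := fun x => x - a x • g (radialRetraction x)
  have hF : Continuous F := continuous_id.sub (a.continuous.smul
    (hg.comp_continuous continuous_radialRetraction radialRetraction_mem_closedBall))
  have hsupp : HasCompactSupport fun x => F x - x := by
    simp only [F, sub_sub_cancel_left]
    exact a.hasCompactSupport.smul_right.neg
  obtain ⟨x, hx⟩ := surjective_of_hasCompactSupport_sub_self hF hsupp 0
  replace hx : x = a x • g (radialRetraction x) := sub_eq_zero.1 hx
  have hball : x ∈ closedBall (0 : E) 1 := by
    rw [mem_closedBall_zero_iff, hx, norm_smul, Real.norm_of_nonneg a.nonneg]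
    exact mul_le_one₀ a.le_one (norm_nonneg _)
      (mem_closedBall_zero_iff.1 (hmaps (radialRetraction_mem_closedBall x)))
  rw [a.one_of_mem_closedBall hball, one_smul, radialRetraction_of_mem_closedBall hball] at hx
  exact ⟨x, hball, hx.symm⟩

end Brouwer

theorem stmt0_general {E : Type*} [NormedAddCommGroup E] [NormedSpace ℝ E] [FiniteDimensional ℝ E]
    {f : E → E} (hf : ContinuousOn f (closedBall 0 1))
    (hbd : ∀ x : E, ‖x‖ = 1 → f x ≠ 0 → x ≠ ‖f x‖⁻¹ • f x) :
    ∃ x ∈ closedBall (0 : E) 1, f x = 0 := by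
  obtain ⟨x, hx, hfix⟩ := exists_fixedPoint_of_continuousOn_closedBall
    (continuous_radialRetraction.comp_continuousOn (continuousOn_id.add hf))
    fun z _ => radialRetraction_mem_closedBall (z + f z)
  replace hfix : radialRetraction (x + f x) = x := hfix
  refine ⟨x, hx, by_contra fun hfx => ?_⟩
  have hlt : 1 < ‖x + f x‖ := by
    by_contra! hle
    rw [radialRetraction_of_mem_closedBall (mem_closedBall_zero_iff.2 hle), add_eq_left] at hfix
    exact hfx hfix
  have hpos : 0 < ‖x + f x‖ := one_pos.trans hlt
  rw [radialRetraction_of_one_le_norm hlt.le] at hfix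
  have hnorm : ‖x‖ = 1 := by
    rw [← hfix, norm_smul, norm_inv, norm_norm, inv_mul_cancel₀ hpos.ne']
  have hmul : f x = (‖x + f x‖ - 1) • x := by
    rw [sub_smul, one_smul, eq_sub_iff_add_eq', ← inv_smul_eq_iff₀ hpos.ne', hfix]
  have hnormf : ‖f x‖ = ‖x + f x‖ - 1 := by
    rw [hmul, norm_smul, hnorm, mul_one, ← hmul, Real.norm_of_nonneg (sub_pos.2 hlt).le]
  exact hbd x hnorm hfx (by rw [eq_inv_smul_iff₀ (norm_ne_zero_iff.2 hfx), hnormf, ← hmul])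

/-- Lemma 2.4: a continuous map on the closed unit ball in ℝⁿ that never sends a
boundary point `x` to a positive multiple of itself (i.e. `x ≠ f x / ‖f x‖` whenever
`f x ≠ 0`) must have a zero in the ball. -/
theorem stmt0 (n : ℕ) (f : EuclideanSpace ℝ (Fin n) → EuclideanSpace ℝ (Fin n))
    (hf : ContinuousOn f (Metric.closedBall 0 1))
    (hbd : ∀ x : EuclideanSpace ℝ (Fin n), ‖x‖ = 1 → f x ≠ 0 → x ≠ ‖f x‖⁻¹ • f x) :
    ∃ x ∈ Metric.closedBall (0 : EuclideanSpace ℝ (Fin n)) 1, f x = 0 :=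
  stmt0_general hf hbd
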